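/- arXiv:2010.11814 — 4 statements merged into one kernel-verified Lean document; each statement's English description precedes it below -/
import Mathlib

section
/- Let X be a real normed linear space and let p < 1. Then for all nonzero vectors x, y ∈ X: ‖x‖^p + ‖y‖^p − (‖x‖ + ‖y‖ − ‖x−y‖)·(min{‖x‖,‖y‖})^{p−1} ≤ α_p[x,y] ≤ ‖x‖^p + ‖y‖^p − (‖x‖ + ‖y‖ − ‖x−y‖)·(max{‖x‖,‖y‖})^{p−1}. -/
noncomputable def alphaD {X : Type*} [NormedAddCommGroup X] [NormedSpace ℝ X]
    (p : ℝ) (x y : X) : ℝ :=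
  ‖(‖x‖ ^ (p - 1)) • x - (‖y‖ ^ (p - 1)) • y‖

theorem aux_bounds {X : Type*} [NormedAddCommGroup X] [NormedSpace ℝ X]
    (A B : ℝ) (hB : 0 ≤ B) (h : B ≤ A) (x y : X) :
    A * ‖x - y‖ - (A - B) * ‖y‖ ≤ ‖A • x - B • y‖ ∧
      ‖A • x - B • y‖ ≤ (A - B) * ‖x‖ + B * ‖x - y‖ := by
  have hA : 0 ≤ A := hB.trans h
  have hAB : 0 ≤ A - B := sub_nonneg.2 h
  constructor
  · have h1 : A • (x - y) = (A • x - B • y) - (A - B) • y := by module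
    have h2 := norm_sub_le (A • x - B • y) ((A - B) • y)
    rw [← h1, norm_smul, norm_smul, Real.norm_of_nonneg hA, Real.norm_of_nonneg hAB] at h2
    linarith
  · have h1 : A • x - B • y = (A - B) • x + B • (x - y) := by module
    have h2 := norm_add_le ((A - B) • x) (B • (x - y))
    rw [norm_smul, norm_smul, Real.norm_of_nonneg hB, Real.norm_of_nonneg hAB] at h2
    rw [h1]
    exact h2

theorem pAngular_bounds_p_lt_one
    {X : Type*} [NormedAddCommGroup X] [NormedSpace ℝ X]
    (p : ℝ) (hp : p < 1) (x y : X) (hx : x ≠ 0) (hy : y ≠ 0) :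
    ‖x‖ ^ p + ‖y‖ ^ p - (‖x‖ + ‖y‖ - ‖x - y‖) * (min ‖x‖ ‖y‖) ^ (p - 1)
        ≤ alphaD p x y ∧
      alphaD p x y
        ≤ ‖x‖ ^ p + ‖y‖ ^ p - (‖x‖ + ‖y‖ - ‖x - y‖) * (max ‖x‖ ‖y‖) ^ (p - 1) := by
  have hx0 : 0 < ‖x‖ := norm_pos_iff.2 hx
  have hy0 : 0 < ‖y‖ := norm_pos_iff.2 hy
  have key : ∀ r : ℝ, 0 < r → r ^ p = r ^ (p - 1) * r := by
    intro r hr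
    rw [Real.rpow_sub_one hr.ne']
    field_simp
  unfold alphaD
  rw [key _ hx0, key _ hy0]
  rcases le_total ‖x‖ ‖y‖ with h | h
  · have hm := Real.rpow_le_rpow_of_nonpos hx0 h (by linarith : p - 1 ≤ 0)
    obtain ⟨h1, h2⟩ := aux_bounds _ _ (Real.rpow_nonneg hy0.le (p - 1)) hm x y
    rw [min_eq_left h, max_eq_right h]
    constructor <;> linarith
  · have hm := Real.rpow_le_rpow_of_nonpos hy0 h (by linarith : p - 1 ≤ 0)
    obtain ⟨h1, h2⟩ := aux_bounds _ _ (Real.rpow_nonneg hx0.le (p - 1)) hm y x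
    rw [min_eq_right h, max_eq_left h]
    rw [norm_sub_rev y x, norm_sub_rev (_ • y)] at h1 h2
    constructor <;> linarith
end

section
/- Let X be a real normed linear space and let 0 ≤ p < 1. Then for all nonzero vectors x, y ∈ X: α_p[x,y] ≥ p·(max{‖x‖,‖y‖})^{p−1}·‖x−y‖. -/
theorem aux_le
    {X : Type*} [NormedAddCommGroup X] [NormedSpace ℝ X]
    (p : ℝ) (hp0 : 0 ≤ p) (hp1 : p < 1) (x y : X) (hx : x ≠ 0) (hy : y ≠ 0)
    (h : ‖x‖ ≤ ‖y‖) :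
    p * ‖y‖ ^ (p - 1) * ‖x - y‖ ≤ ‖(‖x‖ ^ (p - 1)) • x - (‖y‖ ^ (p - 1)) • y‖ := by
  have ha : 0 < ‖x‖ := norm_pos_iff.mpr hx
  have hb : 0 < ‖y‖ := norm_pos_iff.mpr hy
  have hAB : ‖y‖ ^ (p - 1) ≤ ‖x‖ ^ (p - 1) :=
    Real.rpow_le_rpow_of_nonpos ha h (by linarith)
  have hB : 0 < ‖y‖ ^ (p - 1) := Real.rpow_pos_of_pos hb _
  have hA : 0 < ‖x‖ ^ (p - 1) := Real.rpow_pos_of_pos ha _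
  have amgm := Real.geom_mean_le_arith_mean2_weighted (by linarith : 0 ≤ 1 - p) hp0
    hb.le ha.le (by ring)
  have e1 : ‖x‖ ^ p = ‖x‖ ^ (p - 1) * ‖x‖ := by
    rw [← Real.rpow_add_one ha.ne']; congr 1; ring
  have e2 : ‖y‖ ^ (p - 1) * ‖y‖ ^ (1 - p) = 1 := by
    rw [← Real.rpow_add hb]; simp
  generalize ‖x‖ ^ (p - 1) = A at *
  generalize ‖y‖ ^ (p - 1) = B at *
  have key : A * ‖x‖ ≤ B * ((1 - p) * ‖y‖ + p * ‖x‖) := by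
    calc A * ‖x‖ = B * (‖y‖ ^ (1 - p) * ‖x‖ ^ p) := by rw [← mul_assoc, e2, e1, one_mul]
      _ ≤ _ := by gcongr
  have t1 : B * ‖x - y‖ ≤ ‖A • x - B • y‖ + (A - B) * ‖x‖ := by
    have e : B • (x - y) = (A • x - B • y) - (A - B) • x := by module
    have n := norm_sub_le (A • x - B • y) ((A - B) • x)
    rwa [← e, norm_smul, norm_smul, Real.norm_of_nonneg hB.le,
      Real.norm_of_nonneg (sub_nonneg.mpr hAB)] at n
  have t2 : B * ‖y‖ - A * ‖x‖ ≤ ‖A • x - B • y‖ := by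
    have n := norm_sub_norm_le (B • y) (A • x)
    rwa [norm_smul, norm_smul, Real.norm_of_nonneg hB.le, Real.norm_of_nonneg hA.le,
      norm_sub_rev] at n
  have s1 := mul_le_mul_of_nonneg_left t1 hp0
  have s2 := mul_le_mul_of_nonneg_left t2 (by linarith : 0 ≤ 1 - p)
  linarith

theorem pAngular_lower_bound_p_in_unit
    {X : Type*} [NormedAddCommGroup X] [NormedSpace ℝ X]
    (p : ℝ) (hp0 : 0 ≤ p) (hp1 : p < 1) (x y : X) (hx : x ≠ 0) (hy : y ≠ 0) :
    alphaD p x y ≥ p * (max ‖x‖ ‖y‖) ^ (p - 1) * ‖x - y‖ := by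
  unfold alphaD
  rcases le_total ‖x‖ ‖y‖ with h | h
  · rw [max_eq_right h]
    exact aux_le p hp0 hp1 x y hx hy h
  · rw [max_eq_left h, norm_sub_rev x y, norm_sub_rev (_ • x)]
    exact aux_le p hp0 hp1 y x hy hx h
end

section
/- Let X be a real normed linear space, let p < 1, and let x, y ∈ X be nonzero. Write m = min{‖x‖,‖y‖}, M = max{‖x‖,‖y‖}, and Δ = |‖x‖^{p−1} − ‖y‖^{p−1}|. Then the following chain holds: ‖x−y‖·M^{p−1} − Δ·m ≤ ‖x−y‖·m^{p−1} − Δ·M = ‖x‖^p + ‖y‖^p − (‖x‖+‖y‖−‖x−y‖)·m^{p−1} ≤ α_p[x,y] ≤ ‖x‖^p + ‖y‖^p − (‖x‖+‖y‖−‖x−y‖)·M^{p−1} ≤ ‖x−y‖·M^{p−1} + Δ·M ≤ ‖x−y‖·m^{p−1} + Δ·m. -/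
theorem pAngular_aux
    {X : Type*} [NormedAddCommGroup X] [NormedSpace ℝ X]
    (p : ℝ) (hp : p < 1) (x y : X) (hx : x ≠ 0) (hy : y ≠ 0)
    (m M Δ : ℝ) (hle : ‖x‖ ≤ ‖y‖) (hm : m = min ‖x‖ ‖y‖) (hM : M = max ‖x‖ ‖y‖)
    (hΔ : Δ = |‖x‖ ^ (p - 1) - ‖y‖ ^ (p - 1)|) :
    ‖x - y‖ * M ^ (p - 1) - Δ * m ≤ ‖x - y‖ * m ^ (p - 1) - Δ * M ∧
    ‖x - y‖ * m ^ (p - 1) - Δ * M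
        = ‖x‖ ^ p + ‖y‖ ^ p - (‖x‖ + ‖y‖ - ‖x - y‖) * m ^ (p - 1) ∧
    ‖x‖ ^ p + ‖y‖ ^ p - (‖x‖ + ‖y‖ - ‖x - y‖) * m ^ (p - 1) ≤ alphaD p x y ∧
    alphaD p x y ≤ ‖x‖ ^ p + ‖y‖ ^ p - (‖x‖ + ‖y‖ - ‖x - y‖) * M ^ (p - 1) ∧
    ‖x‖ ^ p + ‖y‖ ^ p - (‖x‖ + ‖y‖ - ‖x - y‖) * M ^ (p - 1)
        ≤ ‖x - y‖ * M ^ (p - 1) + Δ * M ∧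
    ‖x - y‖ * M ^ (p - 1) + Δ * M ≤ ‖x - y‖ * m ^ (p - 1) + Δ * m := by
  rw [min_eq_left hle] at hm
  rw [max_eq_right hle] at hM
  have ha : 0 < ‖x‖ := norm_pos_iff.mpr hx
  have hb : 0 < ‖y‖ := norm_pos_iff.mpr hy
  have hAB : ‖y‖ ^ (p - 1) ≤ ‖x‖ ^ (p - 1) :=
    Real.rpow_le_rpow_of_nonpos ha hle (by linarith)
  have hB : 0 < ‖y‖ ^ (p - 1) := Real.rpow_pos_of_pos hb _
  have hap : ‖x‖ ^ p = ‖x‖ ^ (p - 1) * ‖x‖ := by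
    rw [Real.rpow_sub_one ha.ne', div_mul_cancel₀ _ ha.ne']
  have hbp : ‖y‖ ^ p = ‖y‖ ^ (p - 1) * ‖y‖ := by
    rw [Real.rpow_sub_one hb.ne', div_mul_cancel₀ _ hb.ne']
  rw [abs_of_nonneg (sub_nonneg.mpr hAB)] at hΔ
  have hd : ‖y‖ - ‖x‖ ≤ ‖x - y‖ := by
    rw [norm_sub_rev]; exact norm_sub_norm_le y x
  subst hm hM hΔ
  rw [hap, hbp]
  unfold alphaD
  generalize ‖x‖ ^ (p - 1) = A at *
  generalize ‖y‖ ^ (p - 1) = B at *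
  have h3 : A * ‖x - y‖ ≤ ‖A • x - B • y‖ + (A - B) * ‖y‖ := by
    have h := norm_sub_le (A • x - B • y) ((A - B) • y)
    have e : A • x - B • y - (A - B) • y = A • (x - y) := by module
    rw [e, norm_smul, norm_smul, Real.norm_of_nonneg (by linarith : 0 ≤ A),
      Real.norm_of_nonneg (sub_nonneg.mpr hAB)] at h
    exact h
  have h4 : ‖A • x - B • y‖ ≤ B * ‖x - y‖ + (A - B) * ‖x‖ := by
    have h := norm_add_le (B • (x - y)) ((A - B) • x)
    have e : B • (x - y) + (A - B) • x = A • x - B • y := by module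
    rw [e, norm_smul, norm_smul, Real.norm_of_nonneg hB.le,
      Real.norm_of_nonneg (sub_nonneg.mpr hAB)] at h
    exact h
  have h5 := mul_nonneg (sub_nonneg.mpr hAB) (sub_nonneg.mpr hd)
  have h6 := mul_nonneg (sub_nonneg.mpr hAB) (sub_nonneg.mpr hle)
  refine ⟨?_, ?_, ?_, ?_, ?_, ?_⟩ <;> linarith

theorem pAngular_bound_chain_p_lt_one
    {X : Type*} [NormedAddCommGroup X] [NormedSpace ℝ X]
    (p : ℝ) (hp : p < 1) (x y : X) (hx : x ≠ 0) (hy : y ≠ 0)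
    (m M Δ : ℝ) (hm : m = min ‖x‖ ‖y‖) (hM : M = max ‖x‖ ‖y‖)
    (hΔ : Δ = |‖x‖ ^ (p - 1) - ‖y‖ ^ (p - 1)|) :
    ‖x - y‖ * M ^ (p - 1) - Δ * m ≤ ‖x - y‖ * m ^ (p - 1) - Δ * M ∧
    ‖x - y‖ * m ^ (p - 1) - Δ * M
        = ‖x‖ ^ p + ‖y‖ ^ p - (‖x‖ + ‖y‖ - ‖x - y‖) * m ^ (p - 1) ∧
    ‖x‖ ^ p + ‖y‖ ^ p - (‖x‖ + ‖y‖ - ‖x - y‖) * m ^ (p - 1) ≤ alphaD p x y ∧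
    alphaD p x y ≤ ‖x‖ ^ p + ‖y‖ ^ p - (‖x‖ + ‖y‖ - ‖x - y‖) * M ^ (p - 1) ∧
    ‖x‖ ^ p + ‖y‖ ^ p - (‖x‖ + ‖y‖ - ‖x - y‖) * M ^ (p - 1)
        ≤ ‖x - y‖ * M ^ (p - 1) + Δ * M ∧
    ‖x - y‖ * M ^ (p - 1) + Δ * M ≤ ‖x - y‖ * m ^ (p - 1) + Δ * m := by
  rcases le_total ‖x‖ ‖y‖ with h | h
  · exact pAngular_aux p hp x y hx hy m M Δ h hm hM hΔ
  · have key := pAngular_aux p hp y x hy hx m M Δ h (by rw [hm, min_comm])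
      (by rw [hM, max_comm]) (by rw [hΔ, abs_sub_comm])
    have e : alphaD p y x = alphaD p x y := norm_sub_rev _ _
    rw [e, norm_sub_rev y x, add_comm (‖y‖ ^ p), add_comm ‖y‖ ‖x‖] at key
    exact key
end

section
/- Let X be a real normed linear space of dimension at least 3 and let p ∈ ℝ, p ≠ 0. Then X is an inner product space (i.e., its norm satisfies the parallelogram law ‖x+y‖² + ‖x−y‖² = 2‖x‖² + 2‖y‖² for all x, y ∈ X) if and only if for all nonzero vectors x, y ∈ X: α_p[x,y] ≥ (2‖x‖^p‖y‖^p·α[x,y] + (‖x‖^p − ‖y‖^p)²)/(‖x‖^p + ‖y‖^p). -/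
noncomputable def angularD {X : Type*} [NormedAddCommGroup X] [NormedSpace ℝ X]
    (x y : X) : ℝ :=
  ‖‖x‖⁻¹ • x - ‖y‖⁻¹ • y‖

/-- Symmetric orthogonality: `s ↦ ‖x + s y‖` is even. -/
def POrth {X : Type*} [NormedAddCommGroup X] [NormedSpace ℝ X] (x y : X) : Prop :=
  ∀ s : ℝ, ‖x + s • y‖ = ‖x - s • y‖

/-- Isosceles orthogonality implies Birkhoff orthogonality. -/
def IsoBirk (X : Type*) [NormedAddCommGroup X] [NormedSpace ℝ X] : Prop :=
  ∀ x y : X, ‖x + y‖ = ‖x - y‖ → ∀ s : ℝ, ‖x‖ ≤ ‖x + s • y‖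

section aux
variable {X : Type*} [NormedAddCommGroup X] [NormedSpace ℝ X]

lemma POrth.symm' {x y : X} (h : POrth x y) : POrth y x := by
  intro s
  by_cases hs : s = 0
  · simp [hs]
  have h1 : y + s • x = s • (x + s⁻¹ • y) := by
    rw [smul_add, smul_inv_smul₀ hs, add_comm]
  have h2 : y - s • x = (-s) • (x - s⁻¹ • y) := by
    rw [smul_sub, neg_smul, neg_smul, smul_inv_smul₀ hs]; abel
  rw [h1, h2, norm_smul, norm_smul, norm_neg, h]

lemma POrth.smul_right {x y : X} (h : POrth x y) (b : ℝ) : POrth x (b • y) := by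
  intro s
  rw [smul_smul]; exact h _

lemma POrth.smul_left {x y : X} (h : POrth x y) (b : ℝ) : POrth (b • x) y :=
  (h.symm'.smul_right b).symm'

lemma POrth.uniq {x y : X} (hy : y ≠ 0) {d : ℝ} (h : POrth x y) (h' : POrth (x + d • y) y) :
    d = 0 := by
  have hper : ∀ t : ℝ, ‖x + (t + 2 * d) • y‖ = ‖x + t • y‖ := by
    intro t
    have h1 := h' (t + d)
    have h2 := h t
    have e1 : x + d • y + (t + d) • y = x + (t + 2 * d) • y := by module
    have e2 : x + d • y - (t + d) • y = x - t • y := by module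
    rw [e1, e2] at h1
    rw [h1, h2]
  have hn : ∀ n : ℕ, ‖x + (n * (2 * d)) • y‖ = ‖x‖ := by
    intro n
    induction n with
    | zero => simp
    | succ k ih =>
      rw [← ih, ← hper ((k : ℝ) * (2 * d))]; push_cast; ring_nf
  by_contra hd
  have hpos : 0 < |2 * d| * ‖y‖ := by positivity
  obtain ⟨n, hn'⟩ := exists_nat_gt ((2 * ‖x‖) / (|2 * d| * ‖y‖))
  rw [div_lt_iff₀ hpos] at hn'
  have h3 : ‖((n : ℝ) * (2 * d)) • y‖ ≤ ‖x + (n * (2 * d)) • y‖ + ‖x‖ := by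
    have := norm_sub_le (x + ((n : ℝ) * (2 * d)) • y) x
    simpa using this
  rw [hn n, norm_smul, Real.norm_eq_abs, abs_mul, Nat.abs_cast] at h3
  nlinarith

lemma exists_argmin (x : X) {y : X} (hy : y ≠ 0) :
    ∃ s₀ : ℝ, ∀ s : ℝ, ‖x + s₀ • y‖ ≤ ‖x + s • y‖ := by
  apply Continuous.exists_forall_le (f := fun s : ℝ => ‖x + s • y‖) (by fun_prop)
  have h1 : Filter.Tendsto (fun s : ℝ => ‖s‖ * ‖y‖ + (-‖x‖)) (Filter.cocompact ℝ) Filter.atTop := by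
    apply Filter.tendsto_atTop_add_const_right
    exact Filter.Tendsto.atTop_mul_const (norm_pos_iff.mpr hy) tendsto_norm_cocompact_atTop
  refine Filter.tendsto_atTop_mono (fun s => ?_) h1
  have := norm_sub_le (x + s • y) x
  rw [add_sub_cancel_left, norm_smul] at this
  linarith

lemma exists_iso (x : X) {y : X} (hy : y ≠ 0) (t : ℝ) :
    ∃ s : ℝ, ‖x + (s + t) • y‖ = ‖x + (s - t) • y‖ := by
  obtain ⟨s₀, h⟩ := exists_argmin x hy
  have hc : Continuous (fun s : ℝ => ‖x + (s + t) • y‖ - ‖x + (s - t) • y‖) := by fun_prop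
  have h1 : ‖x + ((s₀ - t) + t) • y‖ - ‖x + ((s₀ - t) - t) • y‖ ≤ 0 := by
    have := h ((s₀ - t) - t)
    rw [sub_add_cancel]; linarith
  have h2 : 0 ≤ ‖x + ((s₀ + t) + t) • y‖ - ‖x + ((s₀ + t) - t) • y‖ := by
    have := h ((s₀ + t) + t)
    rw [add_sub_cancel_right]; linarith
  obtain ⟨s, hs⟩ := mem_range_of_exists_le_of_exists_ge hc ⟨_, h1⟩ ⟨_, h2⟩
  exact ⟨s, sub_eq_zero.mp hs⟩

lemma porth_of_strict (H : IsoBirk X) {x y : X} (hy : y ≠ 0)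
    (hu : ∀ s : ℝ, ‖x + s • y‖ ≤ ‖x‖ → s = 0) : POrth x y := by
  intro t
  by_cases ht : t = 0
  · simp [ht]
  obtain ⟨s, hs⟩ := exists_iso x hy t
  have h1 := H (x + s • y) (t • y) (by
    have e1 : x + s • y + t • y = x + (s + t) • y := by module
    have e2 : x + s • y - t • y = x + (s - t) • y := by module
    rw [e1, e2, hs]) (-s / t)
  have e3 : x + s • y + (-s / t) • t • y = x := by
    rw [smul_smul, div_mul_cancel₀ _ ht]; module
  rw [e3] at h1
  have h0 := hu s h1
  rw [h0] at hs
  rw [zero_add, zero_sub] at hs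
  rw [hs]; congr 1; module

lemma flat_false (H : IsoBirk X) {m e : X} (he : e ≠ 0) {μ : ℝ}
    (hf : ∀ s : ℝ, |s| ≤ 1 → ‖m + s • e‖ = μ) : False := by
  have hepos := norm_pos_iff.mpr he
  have hB : ∀ s : ℝ, |s| ≤ 3/4 → ∀ σ : ℝ, ‖e‖ ≤ ‖e + σ • (m + s • e)‖ := by
    intro s hs σ
    rw [abs_le] at hs
    have h1 := H ((1/4 : ℝ) • e) (m + s • e) (by
      have e1 : (1/4 : ℝ) • e + (m + s • e) = m + (s + 1/4) • e := by module
      have e2 : (1/4 : ℝ) • e - (m + s • e) = -(m + (s - 1/4) • e) := by module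
      rw [e1, e2, norm_neg, hf _ (by rw [abs_le]; constructor <;> linarith),
        hf _ (by rw [abs_le]; constructor <;> linarith)]) (1/4 * σ)
    have e3 : (1/4 : ℝ) • e + (1/4 * σ) • (m + s • e) = (1/4 : ℝ) • (e + σ • (m + s • e)) := by
      module
    rw [e3, norm_smul, norm_smul] at h1
    exact le_of_mul_le_mul_left h1 (by norm_num)
  have hB2 : ∀ s : ℝ, |s| ≤ 3/4 → ∀ c : ℝ, 0 < c → ∀ σ : ℝ, c * ‖e‖ ≤ ‖c • e + σ • (m + s • e)‖ := by
    intro s hs c hc σ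
    have h1 := hB s hs (σ / c)
    have e1 : c • e + σ • (m + s • e) = c • (e + (σ / c) • (m + s • e)) := by
      rw [smul_add c, smul_smul, mul_div_cancel₀ _ hc.ne']
    rw [e1, norm_smul, Real.norm_eq_abs, abs_of_pos hc]
    gcongr
  have hP : ∀ s : ℝ, |s| ≤ 1/2 → POrth (m + s • e) e := by
    intro s hs
    rw [abs_le] at hs
    have hn : m + s • e ≠ 0 := by
      intro h0
      have h1 := hf s (by rw [abs_le]; constructor <;> linarith)
      rw [h0, norm_zero] at h1
      have h2 := hf 0 (by simp)
      have h3 := hf 1 (by simp)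
      rw [← h1, norm_eq_zero] at h2 h3
      apply he
      have : e = (m + (1:ℝ) • e) - (m + (0:ℝ) • e) := by module
      rw [this, h2, h3, sub_zero]
    refine (porth_of_strict H hn ?_).symm'
    intro σ hσ
    by_contra h0
    rcases lt_or_gt_of_ne h0 with h | h
    · have h1 := hB2 (s + 1/4) (by rw [abs_le]; constructor <;> linarith) (1 - σ/4) (by linarith) σ
      have e1 : (1 - σ/4) • e + σ • (m + (s + 1/4) • e) = e + σ • (m + s • e) := by module
      rw [e1] at h1
      nlinarith
    · have h1 := hB2 (s - 1/4) (by rw [abs_le]; constructor <;> linarith) (1 + σ/4) (by linarith) σ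
      have e1 : (1 + σ/4) • e + σ • (m + (s - 1/4) • e) = e + σ • (m + s • e) := by module
      rw [e1] at h1
      nlinarith
  have h0 := hP 0 (by norm_num)
  have h1 := hP (1/2) (by rw [abs_of_pos] <;> norm_num)
  rw [zero_smul, add_zero] at h0
  have := POrth.uniq he h0 h1
  norm_num at this

lemma uniq_min (H : IsoBirk X) {x y : X} (hy : y ≠ 0) (hmin : ∀ s : ℝ, ‖x‖ ≤ ‖x + s • y‖)
    (t : ℝ) (ht : ‖x + t • y‖ ≤ ‖x‖) : t = 0 := by
  by_contra h0
  refine flat_false H (m := x + (t/2) • y) (e := (t/2) • y) (smul_ne_zero (by simpa using h0) hy)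
    (μ := ‖x‖) ?_
  intro s hs
  rw [abs_le] at hs
  apply le_antisymm
  · have e1 : x + (t/2) • y + s • (t/2) • y = ((1 - s)/2) • x + ((1 + s)/2) • (x + t • y) := by
      module
    rw [e1]
    refine (norm_add_le _ _).trans ?_
    rw [norm_smul, norm_smul, Real.norm_eq_abs, Real.norm_eq_abs, abs_of_nonneg (by linarith),
      abs_of_nonneg (by linarith)]
    nlinarith
  · have e1 : x + (t/2) • y + s • (t/2) • y = x + (t/2 + s * (t/2)) • y := by module
    rw [e1]; exact hmin _

lemma porth_of_min (H : IsoBirk X) {x y : X} (hy : y ≠ 0) (hmin : ∀ s : ℝ, ‖x‖ ≤ ‖x + s • y‖) :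
    POrth x y := porth_of_strict H hy (uniq_min H hy hmin)

lemma exists_coef (H : IsoBirk X) (x y : X) : ∃ c : ℝ, POrth (x - c • y) y := by
  by_cases hy : y = 0
  · exact ⟨0, fun s => by simp [hy]⟩
  obtain ⟨s₀, h⟩ := exists_argmin x hy
  refine ⟨-s₀, porth_of_min H hy fun s => ?_⟩
  have e1 : x - (-s₀) • y = x + s₀ • y := by module
  have e2 : x + s₀ • y + s • y = x + (s₀ + s) • y := by module
  rw [e1, e2]; exact h _

lemma swap_norm (H : IsoBirk X) {x y : X} (h : ‖x‖ = ‖y‖) (a b : ℝ) :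
    ‖a • x + b • y‖ = ‖b • x + a • y‖ := by
  have hP : POrth (x + y) (x - y) := by
    by_cases hxy : x - y = 0
    · intro s; simp [hxy]
    apply porth_of_min H hxy
    apply H
    have e1 : x + y + (x - y) = (2:ℝ) • x := by module
    have e2 : x + y - (x - y) = (2:ℝ) • y := by module
    rw [e1, e2, norm_smul, norm_smul, h]
  have h1 := (hP.smul_left ((a + b)/2)) ((a - b)/2)
  have e1 : ((a + b)/2) • (x + y) + ((a - b)/2) • (x - y) = a • x + b • y := by module
  have e2 : ((a + b)/2) • (x + y) - ((a - b)/2) • (x - y) = b • x + a • y := by module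
  rwa [e1, e2] at h1

lemma coef_uniq {x y : X} (hy : y ≠ 0) {c c' : ℝ} (h : POrth (x - c • y) y)
    (h' : POrth (x - c' • y) y) : c = c' := by
  have e1 : x - c' • y = x - c • y + (c - c') • y := by module
  rw [e1] at h'
  have := POrth.uniq hy h h'
  linarith

lemma coef_symm_eq (H : IsoBirk X) {x y : X} (hxy : ‖x‖ = ‖y‖) {c : ℝ}
    (h : POrth (x - c • y) y) : POrth (y - c • x) x := by
  intro s
  have h1 := h s
  have e1 : x - c • y + s • y = (1:ℝ) • x + (s - c) • y := by module
  have e2 : x - c • y - s • y = (1:ℝ) • x + (-s - c) • y := by module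
  have e3 : y - c • x + s • x = (s - c) • x + (1:ℝ) • y := by module
  have e4 : y - c • x - s • x = (-s - c) • x + (1:ℝ) • y := by module
  rw [e1, e2, swap_norm H hxy, swap_norm H hxy 1] at h1
  rw [e3, e4, h1]

/-- The candidate inner product. -/
noncomputable def brk (H : IsoBirk X) (x y : X) : ℝ := (exists_coef H x y).choose * ‖y‖ ^ 2

lemma brk_eq (H : IsoBirk X) {x y : X} {c : ℝ} (h : POrth (x - c • y) y) :
    brk H x y = c * ‖y‖ ^ 2 := by
  by_cases hy : y = 0
  · simp [brk, hy]
  · rw [brk, coef_uniq hy (exists_coef H x y).choose_spec h]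

lemma brk_symm (H : IsoBirk X) (x y : X) : brk H x y = brk H y x := by
  by_cases hy : y = 0
  · rw [brk_eq H (x := y) (y := x) (c := 0) (fun s => by simp [hy])]
    simp [brk, hy]
  by_cases hx : x = 0
  · rw [brk_eq H (x := x) (y := y) (c := 0) (fun s => by simp [hx])]
    simp [brk, hx]
  have hxn : ‖x‖ ≠ 0 := norm_ne_zero_iff.mpr hx
  have hyn : ‖y‖ ≠ 0 := norm_ne_zero_iff.mpr hy
  obtain ⟨c, hc⟩ := exists_coef H x y
  have h1 : POrth (‖y‖ • x - (c * ‖y‖ / ‖x‖) • (‖x‖ • y)) (‖x‖ • y) := by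
    have e : ‖y‖ • x - (c * ‖y‖ / ‖x‖) • (‖x‖ • y) = ‖y‖ • (x - c • y) := by
      rw [smul_smul, div_mul_cancel₀ _ hxn]; module
    rw [e]
    exact (hc.smul_left _).smul_right _
  have h2 := coef_symm_eq H (by rw [norm_smul, norm_smul]; simp [mul_comm]) h1
  have h3 := (h2.smul_left ‖x‖⁻¹).smul_right ‖y‖⁻¹
  have e : ‖x‖⁻¹ • (‖x‖ • y - (c * ‖y‖ / ‖x‖) • ‖y‖ • x) = y - (c * ‖y‖ ^ 2 / ‖x‖ ^ 2) • x := by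
    rw [smul_sub, inv_smul_smul₀ hxn, smul_smul, smul_smul]
    congr 2
    field_simp
  rw [e, inv_smul_smul₀ hyn] at h3
  rw [brk_eq H hc, brk_eq H h3]
  field_simp

lemma brk_self_add (H : IsoBirk X) (x y : X) : brk H (x + y) x = ‖x‖ ^ 2 + brk H y x := by
  obtain ⟨c, hc⟩ := exists_coef H y x
  rw [brk_eq H hc, brk_eq H (x := x + y) (c := 1 + c) ?_]
  · ring
  · have : x + y - (1 + c) • x = y - c • x := by module
    rwa [this]

lemma brk_neg_left (H : IsoBirk X) (x y : X) : brk H (-x) y = - brk H x y := by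
  obtain ⟨c, hc⟩ := exists_coef H x y
  rw [brk_eq H hc, brk_eq H (x := -x) (c := -c) ?_]
  · ring
  · have : -x - (-c) • y = (-1 : ℝ) • (x - c • y) := by module
    rw [this]; exact hc.smul_left _

lemma norm_add_sq_brk (H : IsoBirk X) (x y : X) :
    ‖x + y‖ ^ 2 = ‖x‖ ^ 2 + ‖y‖ ^ 2 + 2 * brk H x y := by
  have h1 := brk_self_add H (x + y) (-x)
  rw [show x + y + -x = y by abel, brk_neg_left] at h1
  have h2 := brk_self_add H x y
  have h3 := brk_self_add H y x
  rw [add_comm y x] at h3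
  rw [brk_symm H y, brk_symm H x (x + y)] at h1
  rw [brk_symm H y x] at h2
  linarith

lemma parallelogram_of_isoBirk (H : IsoBirk X) (x y : X) :
    ‖x + y‖ ^ 2 + ‖x - y‖ ^ 2 = 2 * ‖x‖ ^ 2 + 2 * ‖y‖ ^ 2 := by
  have h1 := norm_add_sq_brk H x y
  have h2 := norm_add_sq_brk H x (-y)
  rw [brk_symm, brk_neg_left, brk_symm, norm_neg, ← sub_eq_add_neg] at h2
  linarith

lemma isoBirk_of_bound {p : ℝ} (hp : p ≠ 0)
    (h : ∀ x y : X, x ≠ 0 → y ≠ 0 →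
        alphaD p x y
          ≥ (2 * ‖x‖ ^ p * ‖y‖ ^ p * angularD x y + (‖x‖ ^ p - ‖y‖ ^ p) ^ 2) /
              (‖x‖ ^ p + ‖y‖ ^ p)) : IsoBirk X := by
  -- reduction to unit vectors
  have hU : ∀ u v : X, ‖u‖ = 1 → ‖v‖ = 1 → ∀ a b : ℝ, 0 < a → 0 < b →
      (2 * a * b * ‖u - v‖ + (a - b) ^ 2) / (a + b) ≤ ‖a • u - b • v‖ := by
    intro u v hu hv a b ha hb
    have key : ∀ (w : X) (c : ℝ), ‖w‖ = 1 → 0 < c → ∃ z : X, z ≠ 0 ∧ ‖z‖ ^ p = c ∧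
        ‖z‖ ^ (p - 1) • z = c • w ∧ ‖z‖⁻¹ • z = w := by
      intro w c hw hc
      have hr : 0 < c ^ p⁻¹ := Real.rpow_pos_of_pos hc _
      have hn : ‖c ^ p⁻¹ • w‖ = c ^ p⁻¹ := by
        rw [norm_smul, hw, mul_one, Real.norm_eq_abs, abs_of_pos hr]
      have hcp : (c ^ p⁻¹) ^ p = c := Real.rpow_inv_rpow hc.le hp
      refine ⟨c ^ p⁻¹ • w, ?_, ?_, ?_, ?_⟩
      · rw [← norm_pos_iff, hn]; exact hr
      · rw [hn, hcp]
      · rw [hn, smul_smul, Real.rpow_sub_one hr.ne', hcp, div_mul_cancel₀ _ hr.ne']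
      · rw [hn, inv_smul_smul₀ hr.ne']
    obtain ⟨x, hx0, hx1, hx2, hx3⟩ := key u a hu ha
    obtain ⟨y, hy0, hy1, hy2, hy3⟩ := key v b hv hb
    have := h x y hx0 hy0
    rw [alphaD, angularD, hx1, hx2, hx3, hy1, hy2, hy3] at this
    exact this
  intro x y hxy
  by_cases hr0 : ‖x + y‖ = 0
  · have h1 := norm_eq_zero.mp hr0
    have h2 := norm_eq_zero.mp (hxy ▸ hr0)
    have : x = (1/2 : ℝ) • ((x + y) + (x - y)) := by module
    rw [h1, h2] at this
    intro s
    rw [this]; simp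
  have hr : 0 < ‖x + y‖ := lt_of_le_of_ne (norm_nonneg _) (Ne.symm hr0)
  have hloc : ∀ s : ℝ, |s| < 1 → (1 - s ^ 2) * ‖x‖ ≤ ‖x + s • y‖ := by
    intro s hs
    rw [abs_lt] at hs
    set r := ‖x + y‖ with hrdef
    have h1 := hU (r⁻¹ • (x + y)) (r⁻¹ • (y - x))
      (by rw [norm_smul, norm_inv, norm_norm]; exact inv_mul_cancel₀ hr0)
      (by rw [norm_smul, norm_inv, norm_norm, norm_sub_rev, ← hxy]; exact inv_mul_cancel₀ hr0)
      (1 + s) (1 - s) (by linarith) (by linarith)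
    have e1 : r⁻¹ • (x + y) - r⁻¹ • (y - x) = (2 * r⁻¹) • x := by module
    have e2 : (1 + s) • r⁻¹ • (x + y) - (1 - s) • r⁻¹ • (y - x) = (2 * r⁻¹) • (x + s • y) := by
      module
    have hpos : 0 < 2 * r⁻¹ := by positivity
    rw [e1, e2, norm_smul, norm_smul, Real.norm_eq_abs, abs_of_pos hpos,
      show (1 + s) + (1 - s) = 2 by ring, div_le_iff₀ two_pos] at h1
    have h2 : (2 * r⁻¹) * ((1 - s ^ 2) * ‖x‖) ≤ (2 * r⁻¹) * ‖x + s • y‖ := by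
      nlinarith [sq_nonneg s]
    exact le_of_mul_le_mul_left h2 hpos
  intro s
  by_contra hlt
  push Not at hlt
  -- choose a small parameter
  set D := ‖x‖ - ‖x + s • y‖ with hD
  have hDpos : 0 < D := by linarith
  obtain ⟨l, hl0, hl⟩ : ∃ l : ℝ, 0 < l ∧ l * (1 + |s| + s ^ 2 * ‖x‖ / D) < 1 := by
    have hK : 0 < 1 + |s| + s ^ 2 * ‖x‖ / D := by positivity
    refine ⟨(2 * (1 + |s| + s ^ 2 * ‖x‖ / D))⁻¹, by positivity, ?_⟩
    rw [mul_inv, mul_assoc, inv_mul_cancel₀ hK.ne']; norm_num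
  have hq : 0 ≤ s ^ 2 * ‖x‖ / D := by positivity
  have hl1 : l < 1 := by nlinarith [abs_nonneg s]
  have hls : |l * s| < 1 := by
    rw [abs_mul, abs_of_pos hl0]; nlinarith [abs_nonneg s]
  have hlD : l * (s ^ 2 * ‖x‖) < D := by
    have : l * (s ^ 2 * ‖x‖ / D) < 1 := by nlinarith [abs_nonneg s]
    rw [← mul_div_assoc, div_lt_one hDpos] at this
    exact this
  have h1 := hloc (l * s) hls
  have e1 : x + (l * s) • y = (1 - l) • x + l • (x + s • y) := by module
  have h2 : ‖x + (l * s) • y‖ ≤ (1 - l) * ‖x‖ + l * ‖x + s • y‖ := by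
    rw [e1]
    refine (norm_add_le _ _).trans ?_
    rw [norm_smul, norm_smul, Real.norm_eq_abs, Real.norm_eq_abs, abs_of_pos hl0,
      abs_of_pos (by linarith)]
  have h3 : l * D ≤ l * (l * (s ^ 2 * ‖x‖)) := by rw [hD]; nlinarith
  have := le_of_mul_le_mul_left h3 hl0
  linarith

lemma unit_identity (h : ∀ x y : X, ‖x + y‖ ^ 2 + ‖x - y‖ ^ 2 = 2 * ‖x‖ ^ 2 + 2 * ‖y‖ ^ 2)
    (u v : X) (hu : ‖u‖ = 1) (hv : ‖v‖ = 1) (a b : ℝ) :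
    ‖a • u - b • v‖ ^ 2 = (a - b) ^ 2 + a * b * ‖u - v‖ ^ 2 := by
  let _ : InnerProductSpace ℝ X := InnerProductSpace.ofNorm ℝ (fun x y => by
    have := h x y
    nlinarith)
  rw [norm_sub_sq_real, norm_sub_sq_real, real_inner_smul_left, real_inner_smul_right,
    norm_smul, norm_smul, hu, hv]
  simp only [Real.norm_eq_abs, mul_one, sq_abs]
  ring

lemma bound_of_parallelogram (p : ℝ)
    (h : ∀ x y : X, ‖x + y‖ ^ 2 + ‖x - y‖ ^ 2 = 2 * ‖x‖ ^ 2 + 2 * ‖y‖ ^ 2)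
    (x y : X) (hx : x ≠ 0) (hy : y ≠ 0) :
    (2 * ‖x‖ ^ p * ‖y‖ ^ p * angularD x y + (‖x‖ ^ p - ‖y‖ ^ p) ^ 2) /
              (‖x‖ ^ p + ‖y‖ ^ p) ≤ alphaD p x y := by
  have key : ∀ z : X, z ≠ 0 → 0 < ‖z‖ ^ p ∧ ‖(‖z‖⁻¹ • z)‖ = 1 ∧
      ‖z‖ ^ (p - 1) • z = ‖z‖ ^ p • (‖z‖⁻¹ • z) := by
    intro z hz
    have hz' := norm_pos_iff.mpr hz
    refine ⟨Real.rpow_pos_of_pos hz' _, ?_, ?_⟩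
    · rw [norm_smul, norm_inv, norm_norm, inv_mul_cancel₀ hz'.ne']
    · rw [smul_smul, Real.rpow_sub_one hz'.ne', div_eq_mul_inv]
  obtain ⟨ha, hu, ex⟩ := key x hx
  obtain ⟨hb, hv, ey⟩ := key y hy
  rw [alphaD, angularD, ex, ey]
  generalize ‖x‖⁻¹ • x = u at *
  generalize ‖y‖⁻¹ • y = v at *
  generalize ‖x‖ ^ p = a at *
  generalize ‖y‖ ^ p = b at *
  have hid := unit_identity h u v hu hv a b
  have hd := norm_nonneg (u - v)
  rw [div_le_iff₀ (by linarith)]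
  refine (sq_le_sq₀ (by positivity) (by positivity)).mp ?_
  rw [mul_pow, hid]
  have : 0 ≤ (a - b) ^ 2 * (a * b) * (‖u - v‖ - 2) ^ 2 := by positivity
  nlinarith

end aux

theorem pAngular_lower_bound_characterizes_inner
    {X : Type*} [NormedAddCommGroup X] [NormedSpace ℝ X]
    (hdim : 3 ≤ Module.rank ℝ X) (p : ℝ) (hp : p ≠ 0) :
    (∀ x y : X, ‖x + y‖ ^ 2 + ‖x - y‖ ^ 2 = 2 * ‖x‖ ^ 2 + 2 * ‖y‖ ^ 2) ↔
      (∀ x y : X, x ≠ 0 → y ≠ 0 →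
        alphaD p x y
          ≥ (2 * ‖x‖ ^ p * ‖y‖ ^ p * angularD x y + (‖x‖ ^ p - ‖y‖ ^ p) ^ 2) /
              (‖x‖ ^ p + ‖y‖ ^ p)) := by
  constructor
  · intro h x y hx hy
    exact bound_of_parallelogram p h x y hx hy
  · intro h
    exact parallelogram_of_isoBirk (isoBirk_of_bound hp h)
end
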